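/- arXiv:2106.03753 — 4 statements merged into one kernel-verified Lean document; each statement's English description precedes it below -/
import Mathlib

section
/- Let L be a natural number and S a nonempty finite set of natural numbers all less than 2^L, and let C 0, C 1, …, C L be the season elimination process on S. Then C L = {max S}, i.e., the final set is the singleton consisting of the maximum element of S. -/
/-- One step of the season elimination process: at step `k` (bit position `L - 1 - k`,
most significant bit first), the candidates whose bit is `1` eliminate those whose bit
is `0`; if no candidate has bit `1`, the candidate set is unchanged. -/
def seasonStep (L k : ℕ) (C : Finset ℕ) : Finset ℕ :=
  let C' := C.filter fun x => Nat.testBit x (L - 1 - k) = true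
  if C'.Nonempty then C' else C

/-- The season elimination process on a finite set `S` of `L`-bit identifiers:
`seasonProcess L S 0 = S` and `seasonProcess L S (k+1)` is obtained from
`seasonProcess L S k` by one elimination step on bit `L - 1 - k`. -/
def seasonProcess (L : ℕ) (S : Finset ℕ) : ℕ → Finset ℕ
  | 0 => S
  | k + 1 => seasonStep L k (seasonProcess L S k)

/-!
A step keeps the candidates whose current bit is greatest, since `false < true`. Successive
maximization of the bits from the most significant one down is lexicographic maximization of the
code-words, and the lexicographic order of `L`-bit code-words is the numerical order.
-/

/-- The elements of `S` at which `f` attains its greatest value on `S`. The process is analysed by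
recognizing each of its candidate sets as such a set. -/
def maximizers {α β : Type*} [LE β] [DecidableLE β] (S : Finset α) (f : α → β) : Finset α :=
  S.filter fun x => ∀ y ∈ S, f y ≤ f x

section Maximizers

variable {α β γ : Type*} {S : Finset α}

theorem mem_maximizers [LE β] [DecidableLE β] {f : α → β} {x : α} :
    x ∈ maximizers S f ↔ x ∈ S ∧ ∀ y ∈ S, f y ≤ f x :=
  Finset.mem_filter

theorem maximizers_congr [LE β] [DecidableLE β] [LE γ] [DecidableLE γ] {f : α → β} {g : α → γ}
    (h : ∀ x ∈ S, ∀ y ∈ S, f x ≤ f y ↔ g x ≤ g y) : maximizers S f = maximizers S g :=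
  Finset.filter_congr fun x hx => forall₂_congr fun y hy => h y hy x hx

theorem maximizers_eq_self [Preorder β] [DecidableLE β] {f : α → β}
    (h : ∀ x ∈ S, ∀ y ∈ S, f x = f y) : maximizers S f = S :=
  Finset.filter_true_of_mem fun x hx y hy => (h y hy x hx).le

theorem maximizers_maximizers [PartialOrder β] [DecidableLE β] [Preorder γ] [DecidableLE γ]
    [DecidableLE (β ×ₗ γ)] (f : α → β) (g : α → γ) :
    maximizers (maximizers S f) g = maximizers S fun x => toLex (f x, g x) := by
  ext x
  simp only [mem_maximizers, Prod.Lex.toLex_le_toLex']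
  constructor
  · rintro ⟨⟨hx, hf⟩, hg⟩
    refine ⟨hx, fun y hy => ⟨hf y hy, fun hfy => hg y ⟨hy, ?_⟩⟩⟩
    simpa only [hfy] using hf
  · rintro ⟨hx, hlex⟩
    exact ⟨⟨hx, fun y hy => (hlex y hy).1⟩, fun y ⟨hy, hfy⟩ =>
      (hlex y hy).2 ((hlex y hy).1.antisymm (hfy x hx))⟩

theorem maximizers_id [LinearOrder α] (hS : S.Nonempty) : maximizers S id = {S.max' hS} := by
  ext x
  rw [mem_maximizers, Finset.mem_singleton, eq_comm, Finset.max'_eq_iff]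
  rfl

end Maximizers

theorem seasonStep_eq_maximizers (L k : ℕ) (C : Finset ℕ) :
    seasonStep L k C = maximizers C fun x => x.testBit (L - 1 - k) := by
  simp only [seasonStep]
  split_ifs with hne
  · obtain ⟨y, hy⟩ := hne
    obtain ⟨hyC, hybit⟩ := Finset.mem_filter.1 hy
    exact Finset.filter_congr fun x _ =>
      ⟨fun hxbit z _ => (Bool.le_true _).trans_eq hxbit.symm,
        fun hmax => Bool.eq_true_of_true_le (hybit.ge.trans (hmax y hyC))⟩
  · have hbit : ∀ y ∈ C, y.testBit (L - 1 - k) = false := by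
      simpa only [Finset.not_nonempty_iff_eq_empty, Finset.filter_eq_empty_iff,
        Bool.not_eq_true] using hne
    exact (maximizers_eq_self fun x hx y hy => (hbit x hx).trans (hbit y hy).symm).symm

/-- The number spelled by the first `k` bits of the `L`-bit code-word of `x`, for `k ≤ L`. When
`x ≥ 2 ^ L`, the code-word consists of the `L` low-order bits of `x`. -/
def codewordPrefix (L k x : ℕ) : ℕ :=
  x / 2 ^ (L - k) % 2 ^ k

theorem codewordPrefix_zero (L x : ℕ) : codewordPrefix L 0 x = 0 :=
  Nat.mod_one _

theorem codewordPrefix_self (L x : ℕ) : codewordPrefix L L x = x % 2 ^ L := by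
  rw [codewordPrefix, Nat.sub_self, pow_zero, Nat.div_one]

theorem codewordPrefix_succ {L k : ℕ} (hk : k < L) (x : ℕ) :
    codewordPrefix L (k + 1) x = Nat.bit (x.testBit (L - 1 - k)) (codewordPrefix L k x) := by
  have hcur : L - k = L - 1 - k + 1 := by omega
  have hnext : L - (k + 1) = L - 1 - k := by omega
  rw [codewordPrefix, codewordPrefix, hcur, hnext, Nat.bit_val, Nat.toNat_testBit, pow_succ' 2 k,
    Nat.mod_mul, Nat.div_div_eq_div_mul, ← pow_succ, add_comm]

theorem bit_le_bit_iff_toLex_le_toLex {a b : Bool} {m n : ℕ} :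
    Nat.bit a m ≤ Nat.bit b n ↔ toLex (m, a) ≤ toLex (n, b) := by
  rw [Prod.Lex.toLex_le_toLex, Nat.bit_val, Nat.bit_val]
  cases a <;> cases b <;> simp <;> omega

theorem seasonProcess_eq_maximizers {L k : ℕ} (S : Finset ℕ) (hk : k ≤ L) :
    seasonProcess L S k = maximizers S (codewordPrefix L k) := by
  induction k with
  | zero =>
    exact (maximizers_eq_self fun x _ y _ => by simp only [codewordPrefix_zero]).symm
  | succ k ih =>
    calc seasonProcess L S (k + 1)
        = seasonStep L k (maximizers S (codewordPrefix L k)) := by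
          rw [seasonProcess, ih (Nat.le_of_succ_le hk)]
      _ = maximizers (maximizers S (codewordPrefix L k)) fun x => x.testBit (L - 1 - k) :=
          seasonStep_eq_maximizers L k _
      _ = maximizers S fun x => toLex (codewordPrefix L k x, x.testBit (L - 1 - k)) :=
          maximizers_maximizers _ _
      _ = maximizers S (codewordPrefix L (k + 1)) := by
          refine maximizers_congr fun x _ y _ => ?_
          rw [codewordPrefix_succ hk, codewordPrefix_succ hk, bit_le_bit_iff_toLex_le_toLex]

theorem seasonProcess_final_general (L : ℕ) (S : Finset ℕ) :
    seasonProcess L S L = maximizers S fun x => x % 2 ^ L := by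
  simpa only [← codewordPrefix_self] using seasonProcess_eq_maximizers S le_rfl

/-- After `L` steps, the season elimination process on a nonempty set `S` of naturals
below `2^L` ends with exactly the maximum element of `S` as the unique candidate. -/
theorem seasonProcess_final (L : ℕ) (S : Finset ℕ) (hS : S.Nonempty)
    (hlt : ∀ x ∈ S, x < 2 ^ L) :
    seasonProcess L S L = {S.max' hS} := by
  rw [seasonProcess_final_general, ← maximizers_id hS]
  exact maximizers_congr fun x hx y hy => by
    simp only [Nat.mod_eq_of_lt (hlt x hx), Nat.mod_eq_of_lt (hlt y hy), id_eq]
end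

section
/- Let L be a natural number and S a nonempty finite set of natural numbers all less than 2^L, and let C 0, C 1, …, C L be the season elimination process on S. Then for every k ≤ L the set C k is nonempty and contains max S, and for every k < L one has C (k+1) ⊆ C k. -/
/-!
After `k` steps the candidates are exactly the elements of `S` that agree with `max S` on every bit
position `≥ L - k`. Indeed, among numbers with the same higher bits, a larger one has a `1`
at the next bit whenever a smaller one does, so each step keeps exactly the candidates whose
current bit equals that of `max S`.
-/

theorem testBit_of_le_of_shiftRight_eq {x m j : ℕ} (hle : x ≤ m)
    (hprefix : x >>> (j + 1) = m >>> (j + 1)) (hx : x.testBit j = true) :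
    m.testBit j = true := by
  have hshift : x >>> j ≤ m >>> j := by
    simpa only [Nat.shiftRight_eq_div_pow] using Nat.div_le_div_right hle
  simp only [Nat.testBit_eq_decide_div_mod_eq, ← Nat.shiftRight_eq_div_pow,
    decide_eq_true_eq] at hx ⊢
  rw [Nat.shiftRight_succ, Nat.shiftRight_succ] at hprefix
  omega

theorem shiftRight_eq_iff_succ_and_testBit {x m j : ℕ} :
    x >>> j = m >>> j ↔ x >>> (j + 1) = m >>> (j + 1) ∧ x.testBit j = m.testBit j := by
  simp only [Nat.testBit_eq_decide_div_mod_eq, ← Nat.shiftRight_eq_div_pow, decide_eq_decide,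
    Nat.shiftRight_succ]
  omega

theorem seasonStep_subset (L k : ℕ) (C : Finset ℕ) : seasonStep L k C ⊆ C := by
  simp only [seasonStep]
  split_ifs
  · exact Finset.filter_subset _ _
  · exact Finset.Subset.rfl

theorem seasonStep_eq_filter {L k m : ℕ} {C : Finset ℕ} (hm : m ∈ C)
    (hbit : ∀ x ∈ C, x.testBit (L - 1 - k) = true → m.testBit (L - 1 - k) = true) :
    seasonStep L k C = C.filter fun x => x.testBit (L - 1 - k) = m.testBit (L - 1 - k) := by
  simp only [seasonStep]
  split_ifs with hone
  · obtain ⟨y, hy⟩ := hone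
    obtain ⟨hyC, hybit⟩ := Finset.mem_filter.mp hy
    rw [hbit y hyC hybit]
  · have hzero : ∀ x ∈ C, x.testBit (L - 1 - k) = false := by
      simpa only [Finset.not_nonempty_iff_eq_empty, Finset.filter_eq_empty_iff,
        Bool.not_eq_true] using hone
    exact (Finset.filter_true_of_mem fun x hx => (hzero x hx).trans (hzero m hm).symm).symm

theorem seasonProcess_eq_filter {L k m : ℕ} {S : Finset ℕ} (hm : IsGreatest (S : Set ℕ) m)
    (hprefix : ∀ x ∈ S, x >>> L = m >>> L) (hk : k ≤ L) :
    seasonProcess L S k = S.filter fun x => x >>> (L - k) = m >>> (L - k) := by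
  induction k with
  | zero => exact (Finset.filter_true_of_mem hprefix).symm
  | succ k ih =>
    have hpos : L - k = L - 1 - k + 1 := by omega
    have hC := ih (Nat.le_of_succ_le hk)
    rw [hpos] at hC
    have hmC : m ∈ seasonProcess L S k := by
      rw [hC]
      exact Finset.mem_filter.mpr ⟨hm.1, rfl⟩
    have hbit : ∀ x ∈ seasonProcess L S k,
        x.testBit (L - 1 - k) = true → m.testBit (L - 1 - k) = true := by
      intro x hx
      rw [hC] at hx
      obtain ⟨hxS, hxm⟩ := Finset.mem_filter.mp hx
      exact testBit_of_le_of_shiftRight_eq (hm.2 hxS) hxm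
    calc seasonProcess L S (k + 1)
        = (seasonProcess L S k).filter
            fun x => x.testBit (L - 1 - k) = m.testBit (L - 1 - k) :=
          seasonStep_eq_filter hmC hbit
      _ = S.filter fun x => x >>> (L - 1 - k) = m >>> (L - 1 - k) := by
          simp only [hC, Finset.filter_filter, ← shiftRight_eq_iff_succ_and_testBit]
      _ = S.filter fun x => x >>> (L - (k + 1)) = m >>> (L - (k + 1)) := by
          rw [Nat.sub_sub, Nat.add_comm 1 k]

theorem seasonProcess_invariant_general (L : ℕ) (S : Finset ℕ) (hS : S.Nonempty)
    (hprefix : ∀ x ∈ S, ∀ y ∈ S, x >>> L = y >>> L) :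
    (∀ k ≤ L, (seasonProcess L S k).Nonempty ∧ S.max' hS ∈ seasonProcess L S k) ∧
      (∀ k < L, seasonProcess L S (k + 1) ⊆ seasonProcess L S k) := by
  refine ⟨fun k hk => ?_, fun k _ => seasonStep_subset L k _⟩
  have hmax : S.max' hS ∈ seasonProcess L S k := by
    rw [seasonProcess_eq_filter (S.isGreatest_max' hS)
      (fun x hx => hprefix x hx _ (S.max'_mem hS)) hk]
    exact Finset.mem_filter.mpr ⟨S.max'_mem hS, rfl⟩
  exact ⟨⟨_, hmax⟩, hmax⟩

/-- Invariant of the season elimination process on a nonempty set `S` of naturals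
below `2^L`: every candidate set is nonempty and contains the maximum of `S`, and the
candidate sets only shrink. -/
theorem seasonProcess_invariant (L : ℕ) (S : Finset ℕ) (hS : S.Nonempty)
    (hlt : ∀ x ∈ S, x < 2 ^ L) :
    (∀ k ≤ L, (seasonProcess L S k).Nonempty ∧ S.max' hS ∈ seasonProcess L S k) ∧
      (∀ k < L, seasonProcess L S (k + 1) ⊆ seasonProcess L S k) := by
  exact seasonProcess_invariant_general L S hS fun x hx y hy =>
    (Nat.shiftRight_eq_zero x L (hlt x hx)).trans (Nat.shiftRight_eq_zero y L (hlt y hy)).symm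
end

section
/- There exist real constants c₁ > 0, c₂ > 0, c > 0, C > 0 and a natural number n₀ such that for every n ≥ n₀ the following holds. Let m = ⌈n / log₂ n⌉ and let n stations independently and uniformly at random each choose one of m groups. Then with probability at least 1 − C·n^(−c), every group b has load between c₁·log₂ n and c₂·log₂ n. -/
/-!
The load of a group is a sum of `n` independent indicators of mean `1 / m`, so its
moment-generating function is at most that of a Poisson variable of mean `n / m ∼ log₂ n`.
Chernoff's bound makes each of the events `load ≥ 3 log₂ n` and `load ≤ (log₂ n) / 40` have
probability at most `n ^ (-11 / 10)`: the exponent beats `1` because a Poisson variable of mean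
`log₂ n` vanishes with probability `n ^ (-1 / log 2)` and `1 / log 2 > 1`. A union bound over the
at most `n` groups then loses only one factor `n`.
-/

open MeasureTheory

/-- The uniform probability measure on `Fin m` (for `m ≥ 1`): counting measure
normalized by the cardinality `m`. -/
noncomputable def uniformFin (m : ℕ) : Measure (Fin m) :=
  (m : ENNReal)⁻¹ • Measure.count

/-- The distribution of `n` stations each independently and uniformly choosing one of
`m` groups: the product of `n` copies of the uniform measure on `Fin m`. -/
noncomputable def uniformChoices (n m : ℕ) : Measure (Fin n → Fin m) :=
  Measure.pi fun _ => uniformFin m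

/-- The load of group `b` under the outcome `X`: the number of stations choosing `b`. -/
def load {n m : ℕ} (X : Fin n → Fin m) (b : Fin m) : ℕ :=
  (Finset.univ.filter fun i => X i = b).card

open Filter ProbabilityTheory

section SubPoisson

variable {Ω : Type*} {mΩ : MeasurableSpace Ω} {μ : Measure Ω} {X : Ω → ℝ} {r t L : ℝ}

theorem exp_mul_le_one_add_mul {x : ℝ} (hx : x ∈ Set.Icc 0 1) (t : ℝ) :
    Real.exp (t * x) ≤ 1 + x * (Real.exp t - 1) := by
  have hexp : -1 ≤ Real.exp t - 1 := by linarith [Real.exp_pos t]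
  simpa [Real.exp_mul] using rpow_one_add_le_one_add_mul_self hexp hx.1 hx.2

/-- `X` is *sub-Poisson* with parameter `r`: its moment-generating function is everywhere at most
that of the Poisson distribution of mean `r`. It provides Chernoff bounds on both tails, hence the
bound for `t` of either sign; under a probability measure this forces `r` to be the mean of `X`,
both sides being `1` at `t = 0`. -/
structure HasSubPoissonMGF (X : Ω → ℝ) (r : ℝ) (μ : Measure Ω) : Prop where
  integrable_exp_mul : ∀ t, Integrable (fun ω => Real.exp (t * X ω)) μ
  mgf_le : ∀ t, mgf X μ t ≤ Real.exp (r * (Real.exp t - 1))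

namespace HasSubPoissonMGF

theorem aemeasurable (h : HasSubPoissonMGF X r μ) : AEMeasurable X μ :=
  Real.aemeasurable_of_aemeasurable_exp_mul one_ne_zero (h.integrable_exp_mul 1).aemeasurable

theorem of_mem_Icc_zero_one [IsProbabilityMeasure μ] (hX : AEMeasurable X μ)
    (h01 : ∀ᵐ ω ∂μ, X ω ∈ Set.Icc 0 1) : HasSubPoissonMGF X (∫ ω, X ω ∂μ) μ where
  integrable_exp_mul t := integrable_exp_mul_of_mem_Icc hX h01
  mgf_le t := by
    have hint : Integrable X μ := Integrable.of_mem_Icc 0 1 hX h01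
    calc mgf X μ t
      _ ≤ ∫ ω, 1 + X ω * (Real.exp t - 1) ∂μ :=
          integral_mono_ae (integrable_exp_mul_of_mem_Icc hX h01)
            ((integrable_const 1).add (hint.mul_const _))
            (h01.mono fun ω hω => exp_mul_le_one_add_mul hω t)
      _ = (∫ ω, X ω ∂μ) * (Real.exp t - 1) + 1 := by
          rw [integral_add (integrable_const 1) (hint.mul_const _), integral_mul_const]
          simp [add_comm]
      _ ≤ Real.exp ((∫ ω, X ω ∂μ) * (Real.exp t - 1)) := Real.add_one_le_exp _

theorem sum_of_iIndepFun {ι : Type*} [Fintype ι] {X : ι → Ω → ℝ} {r : ι → ℝ}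
    (hindep : iIndepFun X μ) (h : ∀ i, HasSubPoissonMGF (X i) (r i) μ) :
    HasSubPoissonMGF (∑ i, X i) (∑ i, r i) μ := by
  have := hindep.isProbabilityMeasure
  have hmgf (t : ℝ) : mgf (∑ i, X i) μ t = ∏ i, mgf (X i) μ t :=
    hindep.mgf_sum₀ (fun i => (h i).aemeasurable) Finset.univ
  refine ⟨fun t => ?_, fun t => ?_⟩
  · -- A non-integrable exponential would have the junk moment-generating function `0`.
    by_contra hint
    have hpos : 0 < ∏ i, mgf (X i) μ t :=
      Finset.prod_pos fun i _ => mgf_pos ((h i).integrable_exp_mul t)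
    exact hpos.ne' ((hmgf t).symm.trans (mgf_undef hint))
  · rw [hmgf, Finset.sum_mul, Real.exp_sum]
    exact Finset.prod_le_prod (fun _ _ => mgf_nonneg) fun i _ => (h i).mgf_le t

theorem sum_indicator_pi {ι : Type*} [Fintype ι] {Ω : ι → Type*} [∀ i, MeasurableSpace (Ω i)]
    {μ : ∀ i, Measure (Ω i)} [∀ i, IsProbabilityMeasure (μ i)] {s : ∀ i, Set (Ω i)}
    (hs : ∀ i, MeasurableSet (s i)) :
    HasSubPoissonMGF (fun ω => ∑ i, (s i).indicator (1 : Ω i → ℝ) (ω i)) (∑ i, (μ i).real (s i))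
      (Measure.pi μ) := by
  have hmeas (i : ι) : Measurable ((s i).indicator (1 : Ω i → ℝ)) :=
    measurable_one.indicator (hs i)
  have hmean (i : ι) :
      ∫ ω, (s i).indicator (1 : Ω i → ℝ) (ω i) ∂Measure.pi μ = (μ i).real (s i) := by
    rw [integral_comp_eval (hmeas i).aestronglyMeasurable, integral_indicator_one (hs i)]
  have hindicator (i : ι) : HasSubPoissonMGF
      (fun ω => (s i).indicator (1 : Ω i → ℝ) (ω i)) ((μ i).real (s i)) (Measure.pi μ) := by
    rw [← hmean i]
    refine of_mem_Icc_zero_one ((hmeas i).comp (measurable_pi_apply i)).aemeasurable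
      (.of_forall fun ω => ?_)
    by_cases hω : ω i ∈ s i <;> simp [hω]
  convert! sum_of_iIndepFun (iIndepFun_pi fun i => (hmeas i).aemeasurable) hindicator using 1
  exact (Finset.sum_fn _ _).symm

theorem measureReal_ge_le [IsFiniteMeasure μ] (h : HasSubPoissonMGF X r μ) (ht : 0 ≤ t) (a : ℝ) :
    μ.real {ω | a ≤ X ω} ≤ Real.exp (r * (Real.exp t - 1) - t * a) :=
  calc μ.real {ω | a ≤ X ω}
    _ ≤ Real.exp (-t * a) * mgf X μ t := measure_ge_le_exp_mul_mgf a ht (h.integrable_exp_mul t)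
    _ ≤ Real.exp (-t * a) * Real.exp (r * (Real.exp t - 1)) := by gcongr; exact h.mgf_le t
    _ = Real.exp (r * (Real.exp t - 1) - t * a) := by rw [← Real.exp_add]; ring_nf

theorem measureReal_le_le [IsFiniteMeasure μ] (h : HasSubPoissonMGF X r μ) (ht : t ≤ 0) (a : ℝ) :
    μ.real {ω | X ω ≤ a} ≤ Real.exp (r * (Real.exp t - 1) - t * a) :=
  calc μ.real {ω | X ω ≤ a}
    _ ≤ Real.exp (-t * a) * mgf X μ t := measure_le_le_exp_mul_mgf a ht (h.integrable_exp_mul t)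
    _ ≤ Real.exp (-t * a) * Real.exp (r * (Real.exp t - 1)) := by gcongr; exact h.mgf_le t
    _ = Real.exp (r * (Real.exp t - 1) - t * a) := by rw [← Real.exp_add]; ring_nf

theorem measureReal_ge_three_mul_le [IsFiniteMeasure μ] (h : HasSubPoissonMGF X r μ)
    (hL : 0 ≤ L) (hrL : r ≤ L) :
    μ.real {ω | 3 * L ≤ X ω} ≤ (2 ^ L : ℝ) ^ (-(11 / 10) : ℝ) := by
  -- The optimal `t` is `log 3`; `t = log 2` already suffices, as `1 / log 2 - 3 < -11 / 10`.
  refine (h.measureReal_ge_le (Real.log_nonneg one_le_two) _).trans ?_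
  rw [← Real.rpow_mul zero_le_two, Real.rpow_def_of_pos zero_lt_two, Real.exp_log zero_lt_two,
    Real.exp_le_exp]
  nlinarith [Real.log_two_gt_d9]

theorem measureReal_le_div_forty_le [IsFiniteMeasure μ] (h : HasSubPoissonMGF X r μ)
    (hL : 0 ≤ L) (hLr : 9 / 10 * L ≤ r) :
    μ.real {ω | X ω ≤ L / 40} ≤ (2 ^ L : ℝ) ^ (-(11 / 10) : ℝ) := by
  -- With `t = -log 16` the claim is `(15 / 16) * (9 / 10) ≥ (11 / 10 + 4 / 40) * log 2`.
  have ht : -(4 * Real.log 2) ≤ 0 := by linarith [Real.log_nonneg one_le_two]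
  have hexp : Real.exp (-(4 * Real.log 2)) = 1 / 16 := by
    rw [Real.exp_neg, mul_comm, Real.exp_mul, Real.exp_log zero_lt_two]; norm_num
  refine (h.measureReal_le_le ht _).trans ?_
  rw [← Real.rpow_mul zero_le_two, Real.rpow_def_of_pos zero_lt_two, hexp, Real.exp_le_exp]
  nlinarith [Real.log_two_lt_d9]

theorem one_sub_le_measureReal_forall_mem_Icc [IsProbabilityMeasure μ] {β : Type*} [Fintype β]
    {Y : β → Ω → ℝ} {r : β → ℝ} (h : ∀ b, HasSubPoissonMGF (Y b) (r b) μ) (hL : 0 ≤ L)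
    (hr : ∀ b, r b ∈ Set.Icc (9 / 10 * L) L) :
    1 - 2 * Fintype.card β * (2 ^ L : ℝ) ^ (-(11 / 10) : ℝ) ≤
      μ.real {ω | ∀ b, Y b ω ∈ Set.Icc (L / 40) (3 * L)} := by
  set good : Set Ω := {ω | ∀ b, Y b ω ∈ Set.Icc (L / 40) (3 * L)}
  have hcompl : goodᶜ ⊆ ⋃ b, ({ω | Y b ω ≤ L / 40} ∪ {ω | 3 * L ≤ Y b ω}) := by
    intro ω hω
    obtain ⟨b, hb⟩ := not_forall.1 hω
    rw [Set.mem_Icc, not_and_or, not_le, not_le] at hb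
    exact Set.mem_iUnion.2 ⟨b, hb.imp le_of_lt le_of_lt⟩
  have hbad : μ.real goodᶜ ≤ 2 * Fintype.card β * (2 ^ L : ℝ) ^ (-(11 / 10) : ℝ) :=
    calc μ.real goodᶜ
      _ ≤ ∑ b, μ.real ({ω | Y b ω ≤ L / 40} ∪ {ω | 3 * L ≤ Y b ω}) :=
          (measureReal_mono hcompl).trans (measureReal_iUnion_fintype_le _)
      _ ≤ ∑ _ : β, 2 * (2 ^ L : ℝ) ^ (-(11 / 10) : ℝ) := by
          refine Finset.sum_le_sum fun b _ => (measureReal_union_le _ _).trans ?_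
          linarith [(h b).measureReal_le_div_forty_le hL (hr b).1,
            (h b).measureReal_ge_three_mul_le hL (hr b).2]
      _ = 2 * Fintype.card β * (2 ^ L : ℝ) ^ (-(11 / 10) : ℝ) := by
          rw [Finset.sum_const, Finset.card_univ, nsmul_eq_mul]; ring
  have hcover : 1 ≤ μ.real good + μ.real goodᶜ := by
    simpa using measureReal_union_le (μ := μ) good goodᶜ
  linarith

end HasSubPoissonMGF

end SubPoisson

section Load

variable {n m : ℕ}

instance isProbabilityMeasure_uniformFin [NeZero m] : IsProbabilityMeasure (uniformFin m) where
  measure_univ := by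
    simp [uniformFin, ENNReal.inv_mul_cancel (NeZero.ne _) (ENNReal.natCast_ne_top m)]

instance isProbabilityMeasure_uniformChoices [NeZero m] :
    IsProbabilityMeasure (uniformChoices n m) :=
  inferInstanceAs (IsProbabilityMeasure (Measure.pi fun _ => uniformFin m))

theorem uniformFin_real_singleton (b : Fin m) : (uniformFin m).real {b} = (m : ℝ)⁻¹ := by
  simp [uniformFin, measureReal_def]

theorem load_eq_sum_indicator (X : Fin n → Fin m) (b : Fin m) :
    (load X b : ℝ) = ∑ i, Set.indicator {b} (1 : Fin m → ℝ) (X i) := by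
  simp [load, Set.indicator_apply]

theorem hasSubPoissonMGF_load [NeZero m] (b : Fin m) :
    HasSubPoissonMGF (fun X : Fin n → Fin m => (load X b : ℝ)) (n / m) (uniformChoices n m) := by
  simpa [load_eq_sum_indicator, uniformFin_real_singleton, div_eq_mul_inv, uniformChoices] using
    HasSubPoissonMGF.sum_indicator_pi (μ := fun _ : Fin n => uniformFin m)
      fun _ => measurableSet_singleton b

theorem one_sub_rpow_le_uniformChoices_real [NeZero m] (hmn : m ≤ n)
    (hmean : (n / m : ℝ) ∈ Set.Icc (9 / 10 * Real.logb 2 n) (Real.logb 2 n)) :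
    1 - 2 * (n : ℝ) ^ (-(1 / 10) : ℝ) ≤
      (uniformChoices n m).real
        {X | ∀ b, (load X b : ℝ) ∈ Set.Icc (Real.logb 2 n / 40) (3 * Real.logb 2 n)} := by
  have hn : (0 : ℝ) < n := Nat.cast_pos.2 ((Nat.pos_of_neZero m).trans_le hmn)
  have hlog : 0 ≤ Real.logb 2 n := by linarith [hmean.1.trans hmean.2]
  have htail := HasSubPoissonMGF.one_sub_le_measureReal_forall_mem_Icc
    (fun b => hasSubPoissonMGF_load (n := n) b) hlog fun _ => hmean
  rw [Fintype.card_fin, Real.rpow_logb zero_lt_two (by norm_num) hn] at htail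
  calc 1 - 2 * (n : ℝ) ^ (-(1 / 10) : ℝ)
    _ = 1 - 2 * n * (n : ℝ) ^ (-(11 / 10) : ℝ) := by
        rw [mul_assoc, ← Real.rpow_one_add' hn.le (by norm_num)]; norm_num
    _ ≤ 1 - 2 * m * (n : ℝ) ^ (-(11 / 10) : ℝ) := by gcongr
    _ ≤ _ := htail

end Load

section Ceil

variable {x y b : ℝ}

theorem div_natCeil_div_le (hx : 0 < x) (hy : 0 < y) : x / ⌈x / y⌉₊ ≤ y := by
  rw [div_le_comm₀ (Nat.cast_pos.2 (Nat.ceil_pos.2 (div_pos hx hy))) hy]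
  exact Nat.le_ceil _

theorem mul_div_add_le_div_natCeil_div (hx : 0 < x) (hy : 0 < y) :
    x * y / (x + y) ≤ x / ⌈x / y⌉₊ :=
  have : 0 < ⌈x / y⌉₊ := Nat.ceil_pos.2 (div_pos hx hy)
  calc x * y / (x + y)
    _ = x / (x / y + 1) := by field_simp
    _ ≤ x / ⌈x / y⌉₊ := by gcongr; exact (Nat.ceil_lt_add_one (by positivity)).le

theorem eventually_div_natCeil_div_logb_mem_Icc (hb : 1 < b) {θ : ℝ} (hθ : θ < 1) :
    ∀ᶠ x in atTop,
      x / ⌈x / Real.logb b x⌉₊ ∈ Set.Icc (θ * Real.logb b x) (Real.logb b x) := by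
  filter_upwards [eventually_gt_atTop 0,
    (Real.tendsto_logb_atTop hb).eventually_gt_atTop 0,
    (Real.isLittleO_logb_id_atTop (b := b)).bound (sub_pos.2 hθ)] with x hx hlog hsmall
  refine ⟨le_trans ?_ (mul_div_add_le_div_natCeil_div hx hlog), div_natCeil_div_le hx hlog⟩
  have hlog_le : Real.logb b x ≤ (1 - θ) * x := by
    simpa [abs_of_pos, hx, hlog] using hsmall
  rw [le_div_iff₀ (by positivity)]
  have hsum : θ * (x + Real.logb b x) ≤ x := by nlinarith
  nlinarith

end Ceil

/-- When `n` stations independently and uniformly at random each choose one of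
`m = ⌈n / log₂ n⌉` groups, with probability at least `1 - C·n^(-c)` every group
has load `Θ(log n)`, i.e. between `c₁·log₂ n` and `c₂·log₂ n`. -/
theorem balanced_groups_whp :
    ∃ (c₁ c₂ c C : ℝ), 0 < c₁ ∧ 0 < c₂ ∧ 0 < c ∧ 0 < C ∧
      ∃ n₀ : ℕ, ∀ n : ℕ, n₀ ≤ n →
        ENNReal.ofReal (1 - C * (n : ℝ) ^ (-c)) ≤
          uniformChoices n ⌈(n : ℝ) / Real.logb 2 n⌉₊
            {X | ∀ b, c₁ * Real.logb 2 n ≤ (load X b : ℝ) ∧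
                      (load X b : ℝ) ≤ c₂ * Real.logb 2 n} := by
  have hlarge : ∀ᶠ x : ℝ in atTop, 0 < x ∧ 1 ≤ Real.logb 2 x ∧
      x / ⌈x / Real.logb 2 x⌉₊ ∈ Set.Icc (9 / 10 * Real.logb 2 x) (Real.logb 2 x) :=
    (eventually_gt_atTop 0).and <|
      ((Real.tendsto_logb_atTop one_lt_two).eventually_ge_atTop 1).and <|
        eventually_div_natCeil_div_logb_mem_Icc one_lt_two (by norm_num)
  obtain ⟨n₀, hn₀⟩ := eventually_atTop.1 (tendsto_natCast_atTop_atTop.eventually hlarge)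
  refine ⟨1 / 40, 3, 1 / 10, 2, by norm_num, by norm_num, by norm_num, by norm_num, n₀, ?_⟩
  intro n hn
  obtain ⟨hpos, hlog, hmean⟩ := hn₀ n hn
  have hmn : ⌈(n : ℝ) / Real.logb 2 n⌉₊ ≤ n := Nat.ceil_le.2 (div_le_self hpos.le hlog)
  have : NeZero ⌈(n : ℝ) / Real.logb 2 n⌉₊ := ⟨(Nat.ceil_pos.2 (by positivity)).ne'⟩
  rw [← ofReal_measureReal]
  refine ENNReal.ofReal_le_ofReal ?_
  simpa only [Set.mem_Icc, div_eq_inv_mul, mul_one] using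
    one_sub_rpow_le_uniformChoices_real hmn hmean
end

section
/- There exists a natural number n₀ such that for every n ≥ n₀ the following holds. Let m = ⌈n / log₂ n⌉ and let n stations independently and uniformly at random each choose one of m groups. Then for every fixed group b, the probability that the load of b is at least 4·log₂ n is at most n^(−2). -/
/-! The load of a group is a sum of independent indicators, each of mean `p = 1 / m`, and the moment
generating function of such an indicator is `1 + p (exp t - 1) ≤ exp (p (exp t - 1))`. The Chernoff
bound at `t = log 2` therefore gives `P(load ≥ a) ≤ 2 ^ (-a) * exp (n / m)`. For `a = 4 log₂ n` the
first factor is `n ^ (-4)`, and since `n / m ≤ log₂ n ≤ 2 log n` the second is at most `n ^ 2`. -/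

open MeasureTheory

open ProbabilityTheory Real

section Chernoff

variable {Ω ι : Type*} [MeasurableSpace Ω] {μ : Measure Ω}

lemma mgf_indicator_one [IsProbabilityMeasure μ] {A : Set Ω} (hA : MeasurableSet A) (t : ℝ) :
    mgf (A.indicator 1) μ t = 1 + μ.real A * (exp t - 1) := by
  have exp_indicator : (fun ω ↦ exp (t * A.indicator 1 ω)) =
      fun ω ↦ 1 + A.indicator (fun _ ↦ exp t - 1) ω := by
    ext ω
    by_cases hω : ω ∈ A <;> simp [hω]
  rw [mgf, exp_indicator,
    integral_add (integrable_const _) ((integrable_const _).indicator hA),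
    integral_indicator_const _ hA]
  simp

lemma mgf_indicator_one_le_exp [IsProbabilityMeasure μ] {A : Set Ω} (hA : MeasurableSet A) (t : ℝ) :
    mgf (A.indicator 1) μ t ≤ exp (μ.real A * (exp t - 1)) := by
  rw [mgf_indicator_one hA, add_comm]
  exact add_one_le_exp _

lemma measureReal_le_sum_indicator_one_le_exp {A : ι → Set Ω} (hA : ∀ i, MeasurableSet (A i))
    (hindep : iIndepSet A μ) (s : Finset ι) (a : ℝ) {t : ℝ} (ht : 0 ≤ t) :
    μ.real {ω | a ≤ ∑ i ∈ s, (A i).indicator 1 ω} ≤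
      exp (-t * a + (exp t - 1) * ∑ i ∈ s, μ.real (A i)) := by
  have : IsProbabilityMeasure μ := hindep.isProbabilityMeasure
  have indep_indicator : iIndepFun (fun i ↦ (A i).indicator (1 : Ω → ℝ)) μ :=
    hindep.iIndepFun_indicator
  have measurable_indicator (i : ι) : Measurable ((A i).indicator (1 : Ω → ℝ)) :=
    measurable_one.indicator (hA i)
  have integrable_exp : Integrable (fun ω ↦ exp (t * (∑ i ∈ s, (A i).indicator 1) ω)) μ := by
    refine indep_indicator.integrable_exp_mul_sum measurable_indicator fun i _ ↦ ?_
    refine integrable_exp_mul_of_le t 1 ht (measurable_indicator i).aemeasurable ?_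
    exact .of_forall fun ω ↦ Set.indicator_le_self' (fun _ _ ↦ zero_le_one) ω
  calc μ.real {ω | a ≤ ∑ i ∈ s, (A i).indicator 1 ω}
      ≤ exp (-t * a) * mgf (∑ i ∈ s, (A i).indicator 1) μ t := by
        simpa only [Finset.sum_apply] using measure_ge_le_exp_mul_mgf a ht integrable_exp
    _ = exp (-t * a) * ∏ i ∈ s, mgf ((A i).indicator 1) μ t := by
        rw [indep_indicator.mgf_sum measurable_indicator]
    _ ≤ exp (-t * a) * ∏ i ∈ s, exp (μ.real (A i) * (exp t - 1)) := by
        gcongr with i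
        · exact fun _ _ ↦ mgf_nonneg
        · exact mgf_indicator_one_le_exp (hA i) t
    _ = exp (-t * a + (exp t - 1) * ∑ i ∈ s, μ.real (A i)) := by
        rw [← exp_sum, ← exp_add, ← Finset.sum_mul, mul_comm (exp t - 1)]

end Chernoff

lemma iIndepSet_preimage_eval_pi {ι : Type*} [Fintype ι] {α : ι → Type*}
    [∀ i, MeasurableSpace (α i)] (μ : ∀ i, Measure (α i)) [∀ i, IsProbabilityMeasure (μ i)]
    {s : ∀ i, Set (α i)} (hs : ∀ i, MeasurableSet (s i)) :
    iIndepSet (fun i ↦ Function.eval i ⁻¹' s i) (Measure.pi μ) := by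
  have indep_eval : iIndepFun (fun i (x : ∀ i, α i) ↦ x i) (Measure.pi μ) :=
    iIndepFun_pi (X := fun _ ↦ id) fun _ ↦ aemeasurable_id
  rw [iIndepSet_iff_meas_biInter fun i ↦ measurable_pi_apply i (hs i)]
  exact fun S ↦ indep_eval.measure_inter_preimage_eq_mul S fun i _ ↦ hs i

section UniformChoices

variable {n m : ℕ}

lemma uniformFin_singleton (b : Fin m) : uniformFin m {b} = (m : ENNReal)⁻¹ := by
  simp [uniformFin]

instance [NeZero m] : IsProbabilityMeasure (uniformFin m) where
  measure_univ := by
    simp [uniformFin, ENNReal.inv_mul_cancel, NeZero.ne m]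

instance [NeZero m] : IsProbabilityMeasure (uniformChoices n m) := by
  unfold uniformChoices
  infer_instance

lemma uniformChoices_real_eval_eq [NeZero m] (i : Fin n) (b : Fin m) :
    (uniformChoices n m).real {X | X i = b} = (m : ℝ)⁻¹ := by
  change (uniformChoices n m).real (Function.eval i ⁻¹' {b}) = _
  rw [uniformChoices, (measurePreserving_eval _ i).measureReal_preimage
    (measurableSet_singleton b).nullMeasurableSet, measureReal_def, uniformFin_singleton]
  simp

lemma cast_load_eq_sum_indicator (X : Fin n → Fin m) (b : Fin m) :
    (load X b : ℝ) = ∑ i, {Y : Fin n → Fin m | Y i = b}.indicator 1 X := by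
  simp [load, Set.indicator_apply]

lemma uniformChoices_real_le_load_le_exp (b : Fin m) (a : ℝ) {t : ℝ} (ht : 0 ≤ t) :
    (uniformChoices n m).real {X | a ≤ load X b} ≤ exp (-t * a + (exp t - 1) * (n / m)) := by
  have : NeZero m := ⟨b.pos.ne'⟩
  have indep : iIndepSet (fun i ↦ {X | X i = b}) (uniformChoices n m) :=
    iIndepSet_preimage_eval_pi _ fun _ ↦ measurableSet_singleton b
  have chernoff := measureReal_le_sum_indicator_one_le_exp
    (fun _ ↦ .of_discrete) indep Finset.univ a ht
  simpa only [cast_load_eq_sum_indicator, uniformChoices_real_eval_eq,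
    Finset.sum_const, Finset.card_univ, Fintype.card_fin, nsmul_eq_mul, div_eq_mul_inv]
    using chernoff

end UniformChoices

lemma logb_two_le_two_mul_log {x : ℝ} (hx : 1 ≤ x) : logb 2 x ≤ 2 * log x := by
  have half_le_log_two : 1 / 2 ≤ log 2 := by linarith [log_two_gt_d9]
  rw [logb, div_le_iff₀ (log_pos one_lt_two)]
  nlinarith [log_nonneg hx]

theorem group_load_upper_tail_general {n m : ℕ} (hn : 2 ≤ n) (hm : n / logb 2 n ≤ m) (b : Fin m) :
    uniformChoices n m {X | 4 * logb 2 n ≤ (load X b : ℝ)} ≤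
      ENNReal.ofReal ((n : ℝ) ^ (-2 : ℝ)) := by
  have : NeZero m := ⟨b.pos.ne'⟩
  have one_lt_n : (1 : ℝ) < n := by exact_mod_cast hn
  have mean_le : (n / m : ℝ) ≤ 2 * log n :=
    (div_le_comm₀ (logb_pos one_lt_two one_lt_n) (by exact_mod_cast b.pos)).mp hm |>.trans
      (logb_two_le_two_mul_log one_lt_n.le)
  rw [← ofReal_measureReal]
  apply ENNReal.ofReal_le_ofReal
  calc (uniformChoices n m).real {X | 4 * logb 2 n ≤ load X b}
      ≤ exp (-log 2 * (4 * logb 2 n) + (exp (log 2) - 1) * (n / m)) :=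
        uniformChoices_real_le_load_le_exp b _ (log_nonneg one_le_two)
    _ = exp (-4 * log n + n / m) := by
        rw [exp_log two_pos, logb]
        field_simp
        ring_nf
    _ ≤ exp (log n * -2) := exp_le_exp.mpr (by linarith)
    _ = (n : ℝ) ^ (-2 : ℝ) := (rpow_def_of_pos (by linarith) _).symm

/-- Upper-tail (Chernoff-type) bound, per group: when `n` stations independently and
uniformly at random each choose one of `m = ⌈n / log₂ n⌉` groups, for every fixed group
`b` the probability that the load of `b` is at least `4·log₂ n` is at most `n^(-2)`. -/
theorem group_load_upper_tail :
    ∃ n₀ : ℕ, ∀ n : ℕ, n₀ ≤ n →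
      ∀ b : Fin ⌈(n : ℝ) / Real.logb 2 n⌉₊,
        uniformChoices n ⌈(n : ℝ) / Real.logb 2 n⌉₊
            {X | 4 * Real.logb 2 n ≤ (load X b : ℝ)} ≤
          ENNReal.ofReal ((n : ℝ) ^ (-2 : ℝ)) :=
  ⟨2, fun _ hn b ↦ group_load_upper_tail_general hn (Nat.le_ceil _) b⟩
end
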